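/- Let g : [0,1] × [0,1] → [0,∞) be a family of spectral densities, i.e. g is jointly measurable and satisfies: (i) for each s ∈ [0,1] the map t ↦ g(s,t) is continuous; (ii) for each t ∈ [0,1] the map s ↦ g(s,t) is a probability density with respect to Lebesgue measure on [0,1] (nonnegative with ∫_0^1 g(s,t) ds = 1); (iii) ∫_0^1 sup_{t∈[0,1]} g(s,t) ds < ∞. Let U be a random variable uniformly distributed on [0,1]. Then the map f ↦ ∫_0^1 sup_{t∈[0,1]} ( |f(t)| · g(s,t) ) ds defines a norm on C([0,1], ℝ), and for every f ∈ C([0,1], ℝ) this quantity equals E[ sup_{t∈[0,1]} |f(t)| · g(U,t) ]. -/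

import Mathlib

open MeasureTheory unitInterval

/-!
For fixed `s`, the map `f ↦ ⨆ t, |f t| * g s t` is a seminorm, and integrating over `s` preserves
this. Definiteness comes from the unit marginals `∫ g s t ds = 1`, which give `|f t| ≤ N f` for
every `t`, and finiteness from the envelope bound `N f ≤ ‖f‖ * ∫ ⨆ t, g s t ds`. Suprema are taken
in `[0, ∞]`, where they always exist; compactness identifies them with the real ones.
-/

open scoped ENNReal

section DNorm

variable {S T E : Type*} [MeasurableSpace S] {μ : Measure S} {w : S → T → ℝ≥0∞}

/-- The D-norm functional of a family of weights `w` over the measure `μ`; the family consists of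
spectral densities when every `w · t` has integral one. It takes values in `[0, ∞]` and is defined
on all functions, so that suprema need no boundedness and integrals no integrability. -/
noncomputable def dNorm [ENorm E] (μ : Measure S) (w : S → T → ℝ≥0∞) (f : T → E) : ℝ≥0∞ :=
  ∫⁻ s, ⨆ t, ‖f t‖ₑ * w s t ∂μ

theorem dNorm_le_enorm_mul_lintegral [TopologicalSpace T] [CompactSpace T]
    [SeminormedAddCommGroup E] (f : C(T, E)) :
    dNorm μ w f ≤ ‖f‖ₑ * ∫⁻ s, ⨆ t, w s t ∂μ :=
  calc
    dNorm μ w f ≤ ∫⁻ s, ‖f‖ₑ * ⨆ t, w s t ∂μ := by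
      rw [f.enorm_eq_iSup_enorm]
      exact lintegral_mono fun _ => ENNReal.iSup_mul_le
    _ = ‖f‖ₑ * ∫⁻ s, ⨆ t, w s t ∂μ := lintegral_const_mul' _ _ enorm_ne_top

theorem dNorm_const_smul {𝕜 : Type*} [SeminormedRing 𝕜] [SeminormedAddGroup E] [SMul 𝕜 E]
    [NormSMulClass 𝕜 E] (c : 𝕜) (f : T → E) : dNorm μ w (c • f) = ‖c‖ₑ * dNorm μ w f := by
  simp only [dNorm, Pi.smul_apply, enorm_smul, mul_assoc, ← ENNReal.mul_iSup]
  exact lintegral_const_mul' ‖c‖ₑ _ enorm_ne_top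

theorem dNorm_add_le [TopologicalSpace E] [ESeminormedAddMonoid E] {f₁ : T → E}
    (hf₁ : AEMeasurable (fun s => ⨆ t, ‖f₁ t‖ₑ * w s t) μ) (f₂ : T → E) :
    dNorm μ w (f₁ + f₂) ≤ dNorm μ w f₁ + dNorm μ w f₂ := by
  rw [dNorm, dNorm, dNorm, ← lintegral_add_left' hf₁]
  refine lintegral_mono fun s => ?_
  calc
    ⨆ t, ‖(f₁ + f₂) t‖ₑ * w s t ≤ ⨆ t, (‖f₁ t‖ₑ * w s t + ‖f₂ t‖ₑ * w s t) :=
      iSup_mono fun t => by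
        rw [← add_mul]
        exact mul_le_mul_left (enorm_add_le (f₁ t) (f₂ t)) _
    _ ≤ (⨆ t, ‖f₁ t‖ₑ * w s t) + ⨆ t, ‖f₂ t‖ₑ * w s t := iSup_add_le _ _

theorem enorm_mul_lintegral_le_dNorm [SeminormedAddGroup E] (f : T → E) (t : T) :
    ‖f t‖ₑ * ∫⁻ s, w s t ∂μ ≤ dNorm μ w f := by
  rw [← lintegral_const_mul' ‖f t‖ₑ _ enorm_ne_top]
  exact lintegral_mono fun s => le_iSup (fun t => ‖f t‖ₑ * w s t) t

theorem dNorm_eq_zero_iff [NormedAddGroup E] (hw : ∀ t, ∫⁻ s, w s t ∂μ ≠ 0) {f : T → E} :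
    dNorm μ w f = 0 ↔ f = 0 := by
  refine ⟨fun h => funext fun t => ?_, fun h => by simp [dNorm, h]⟩
  have ht : ‖f t‖ₑ * ∫⁻ s, w s t ∂μ = 0 := by
    simpa [h] using enorm_mul_lintegral_le_dNorm (μ := μ) (w := w) f t
  exact enorm_eq_zero.1 ((mul_eq_zero.1 ht).resolve_right (hw t))

end DNorm

theorem measurable_iSup_enorm_mul_enorm {S T E F : Type*} [MeasurableSpace S] [TopologicalSpace T]
    [TopologicalSpace.SeparableSpace T] [SeminormedAddGroup E] [SeminormedAddGroup F]
    [MeasurableSpace F] [OpensMeasurableSpace F] {f : T → E} {g : S → T → F}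
    (hf : Continuous f) (hg_meas : ∀ t, Measurable (g · t)) (hg_cont : ∀ s, Continuous (g s)) :
    Measurable fun s => ⨆ t, ‖f t‖ₑ * ‖g s t‖ₑ := by
  have hcont (s : S) : Continuous fun t => ‖f t‖ₑ * ‖g s t‖ₑ :=
    hf.enorm.ennreal_mul (hg_cont s).enorm (fun _ => .inr enorm_ne_top) (fun _ => .inr enorm_ne_top)
  have hsup : (fun s => ⨆ t, ‖f t‖ₑ * ‖g s t‖ₑ) = ⨆ t, fun s => ‖f t‖ₑ * ‖g s t‖ₑ :=
    funext fun _ => by rw [iSup_apply]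
  rw [hsup]
  exact measurable_iSup_of_lowerSemicontinuous (fun t => (hg_meas t).enorm.const_mul _)
    fun s => (hcont s).lowerSemicontinuous

theorem ofReal_iSup_eq_iSup_enorm {ι : Sort*} {x : ι → ℝ} (hx : ∀ i, 0 ≤ x i)
    (hbdd : BddAbove (Set.range x)) : ENNReal.ofReal (⨆ i, x i) = ⨆ i, ‖x i‖ₑ := by
  lift x to ι → NNReal using hx
  rw [← NNReal.coe_iSup, ENNReal.ofReal_coe_nnreal,
    ENNReal.coe_iSup (NNReal.bddAbove_coe.1 (by rwa [← Set.range_comp]))]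
  simp

theorem ofReal_iSup_norm_mul_eq_iSup_enorm {T E : Type*} [TopologicalSpace T] [CompactSpace T]
    [SeminormedAddCommGroup E] {f : T → E} {u : T → ℝ} (hf : Continuous f) (hu : Continuous u)
    (hu_nonneg : ∀ t, 0 ≤ u t) :
    ENNReal.ofReal (⨆ t, ‖f t‖ * u t) = ⨆ t, ‖f t‖ₑ * ‖u t‖ₑ := by
  rw [ofReal_iSup_eq_iSup_enorm (fun t => mul_nonneg (norm_nonneg _) (hu_nonneg t))
    (isCompact_range (hf.norm.mul hu)).bddAbove]
  simp only [enorm_mul, enorm_norm]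

theorem spectral_densities_define_D_norm_general
    {Ω S T 𝕜 E : Type*} [MeasurableSpace Ω] [MeasurableSpace S] [TopologicalSpace T]
    [CompactSpace T] [TopologicalSpace.SeparableSpace T] [NormedField 𝕜] [NormedAddCommGroup E]
    [NormedSpace 𝕜 E] {P : Measure Ω} {μ : Measure S} {g : S → T → ℝ}
    (hg_meas : ∀ t, Measurable (g · t))
    (hg_nonneg : ∀ s t, 0 ≤ g s t)
    (hg_cont : ∀ s, Continuous (g s))
    (hg_dens : ∀ t, ∫⁻ s, ENNReal.ofReal (g s t) ∂μ = 1)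
    (hg_fin : ∫⁻ s, ENNReal.ofReal (⨆ t, g s t) ∂μ < ⊤)
    {U : Ω → S} (hU : MeasurePreserving U P μ)
    {N : C(T, E) → ℝ≥0∞}
    (hN : ∀ f, N f = ∫⁻ s, ENNReal.ofReal (⨆ t, ‖f t‖ * g s t) ∂μ) :
    ((∀ f, N f < ⊤)
      ∧ (∀ (c : 𝕜) (f), N (c • f) = ENNReal.ofReal ‖c‖ * N f)
      ∧ (∀ f₁ f₂, N (f₁ + f₂) ≤ N f₁ + N f₂)
      ∧ (∀ f, N f = 0 ↔ f = 0))
    ∧ (∀ f : C(T, E), N f = ∫⁻ ω, ENNReal.ofReal (⨆ t, ‖f t‖ * g (U ω) t) ∂P) := by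
  have hsup (f : C(T, E)) (s : S) :
      ENNReal.ofReal (⨆ t, ‖f t‖ * g s t) = ⨆ t, ‖f t‖ₑ * ‖g s t‖ₑ :=
    ofReal_iSup_norm_mul_eq_iSup_enorm f.continuous (hg_cont s) (hg_nonneg s)
  have hmeas (f : C(T, E)) : Measurable fun s => ⨆ t, ‖f t‖ₑ * ‖g s t‖ₑ :=
    measurable_iSup_enorm_mul_enorm f.continuous hg_meas hg_cont
  have hdens (t : T) : ∫⁻ s, ‖g s t‖ₑ ∂μ ≠ 0 := by
    simp [Real.enorm_of_nonneg (hg_nonneg _ t), hg_dens]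
  have hfin : ∫⁻ s, ⨆ t, ‖g s t‖ₑ ∂μ < ∞ := by
    simpa only [ofReal_iSup_eq_iSup_enorm (hg_nonneg _)
      (isCompact_range (hg_cont _)).bddAbove] using hg_fin
  have hN_eq (f : C(T, E)) : N f = dNorm μ (fun s t => ‖g s t‖ₑ) f := by simp_rw [hN, hsup, dNorm]
  simp only [hN_eq, hsup, ofReal_norm]
  refine ⟨⟨fun f => ?finite, fun c f => dNorm_const_smul c f,
    fun f₁ f₂ => dNorm_add_le (hmeas f₁).aemeasurable f₂, fun f => ?definite⟩, fun f => ?law⟩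
  case finite =>
    exact (dNorm_le_enorm_mul_lintegral f).trans_lt (ENNReal.mul_lt_top enorm_lt_top hfin)
  case definite => exact (dNorm_eq_zero_iff hdens).trans (DFunLike.coe_fn_eq (g := 0))
  case law => exact (hU.lintegral_comp (hmeas f)).symm

/-- If `g : [0,1] × [0,1] → [0,∞)` is a family of spectral densities and
`U` is uniformly distributed on `[0,1]`, then `f ↦ ∫_0^1 sup_t (|f t| g(s,t)) ds` is a
norm on `C([0,1], ℝ)` and equals `E[sup_t |f t| g(U,t)]` for every `f`. -/
theorem spectral_densities_define_D_norm
    {Ω : Type*} [MeasurableSpace Ω] (P : Measure Ω) [IsProbabilityMeasure P]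
    (g : I → I → ℝ)
    (hg_meas : Measurable fun p : I × I => g p.1 p.2)
    (hg_nonneg : ∀ s t, 0 ≤ g s t)
    (hg_cont : ∀ s, Continuous (g s))
    (hg_dens : ∀ t : I, ∫⁻ s : I, ENNReal.ofReal (g s t) = 1)
    (hg_fin : ∫⁻ s : I, ENNReal.ofReal (⨆ t : I, g s t) < ⊤)
    (U : Ω → I) (hU_meas : Measurable U)
    (hU_law : Measure.map U P = (volume : Measure I))
    (N : C(I, ℝ) → ENNReal)
    (hN : ∀ f, N f = ∫⁻ s : I, ENNReal.ofReal (⨆ t : I, |f t| * g s t)) :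
    ((∀ f, N f < ⊤)
      ∧ (∀ (c : ℝ) (f), N (c • f) = ENNReal.ofReal |c| * N f)
      ∧ (∀ f₁ f₂, N (f₁ + f₂) ≤ N f₁ + N f₂)
      ∧ (∀ f, N f = 0 ↔ f = 0))
    ∧ (∀ f : C(I, ℝ),
        N f = ∫⁻ ω, ENNReal.ofReal (⨆ t : I, |f t| * g (U ω) t) ∂P) :=
  spectral_densities_define_D_norm_general (fun _ => hg_meas.of_uncurry_right) hg_nonneg hg_cont
    hg_dens hg_fin ⟨hU_meas, hU_law⟩ hN
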